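/- Let (U, A) be a 3-colored digraph where U is a connected unicyclic graph whose unique cycle Γ has weight in {i, −i}, and suppose det A ≠ 0. Then every entry of A⁻¹ lies in {0, 1, −1, i, −i} if and only if U has a unique perfect matching M and the number of pegs on Γ relative to M is not equal to two. -/

import Mathlib

/-!
Deleting an edge `ab` of the cycle `Γ` leaves a forest, on which a diagonal gauge turns all weights
into `1`; the edge `ab` then carries the weight `w(Γ) = ±i` of the whole cycle (`exists_gauged`).
Consider a principal minor of `A` off a vertex set `F`. A nonzero term of its Leibniz expansion
that does not come from a perfect matching of `U - F` uses `ab` in exactly one direction and is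
therefore purely imaginary, while the terms of `σ` and `σ⁻¹` are conjugate. Hence the minor is
`±` the number of perfect matchings of `U - F` (`det_frozenRows`).

If the entries of `A⁻¹` are Gaussian integers, `det A` is an integer whose inverse is a Gaussian
integer, so `U` has exactly one perfect matching `m`. Conversely, given such an `m`, the entries of
`A⁻¹` are Gaussian integers, and Jacobi's identity for complementary minors shows that `A⁻¹` has
zero diagonal and that `|A⁻¹ x y|²` is the number of perfect matchings of `U - x - y`
(`normSq_inv_entry`). So the entries lie in `{0, ±1, ±i}` iff no `U - x - y` has two perfect
matchings.

If there are exactly two pegs, deleting their outer ends leaves two perfect matchings, alternating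
on `Γ` (`exists_two_matchings`). Conversely, let `U - x - y` have two perfect matchings. Every
edge of `Γ` lies in exactly one of them, so both match `Γ` within itself and `Γ` is even; therefore
the number of pegs is even. It is not zero, since otherwise `m` could be changed along `Γ`. Finally,
the component hanging at a peg is odd, so it contains `x` or `y`, and distinct pegs hang distinct
components. So there are exactly two pegs (`pegVerts_card_eq_two`).
-/

open SimpleGraph

/-- A perfect matching of a simple graph, given as a finite set of edges in which
every vertex lies in exactly one edge. -/
def IsPM {V : Type*} [DecidableEq V] (G : SimpleGraph V) (M : Finset (Sym2 V)) : Prop :=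
  (∀ e ∈ M, e ∈ G.edgeSet) ∧ ∀ v : V, (M.filter (fun e => v ∈ e)).card = 1

/-- `G` has a perfect matching. -/
def HasPM {V : Type*} [DecidableEq V] (G : SimpleGraph V) : Prop :=
  ∃ M, IsPM G M

/-- `(G, A)` is a 3-colored digraph: `A` is Hermitian with zero diagonal, entries in
`{1, -1, i, -i}` on edges of `G`, and `0` on non-edges. -/
def ThreeColored {V : Type*} (G : SimpleGraph V) (A : Matrix V V ℂ) : Prop :=
  A.IsHermitian ∧ (∀ v, A v v = 0) ∧
    (∀ u v, G.Adj u v → A u v ∈ ({1, -1, Complex.I, -Complex.I} : Set ℂ)) ∧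
    (∀ u v, u ≠ v → ¬ G.Adj u v → A u v = 0)

/-- The weight of a walk: the product of the entries of `A` along its darts. -/
def walkWeight {V : Type*} {G : SimpleGraph V} (A : Matrix V V ℂ) {u v : V}
    (p : G.Walk u v) : ℂ :=
  (p.darts.map (fun d => A d.toProd.1 d.toProd.2)).prod

/-- A closed walk (e.g. a cycle) `c` is independent in `G` if `G - V(c)` has a
perfect matching. -/
def IsIndep {V : Type*} [DecidableEq V] (G : SimpleGraph V) {u : V} (c : G.Walk u u) : Prop :=
  HasPM (G.induce {x : V | x ∉ c.support})

/-- The number of perfect matchings of `G`. -/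
noncomputable def numPM (V : Type*) [DecidableEq V] (G : SimpleGraph V) : ℕ :=
  {M : Finset (Sym2 V) | IsPM G M}.ncard

/-- A connected graph on `n` vertices is unicyclic if it has exactly `n` edges. -/
def Unicyclic (V : Type*) [Fintype V] (G : SimpleGraph V) : Prop :=
  G.Connected ∧ G.edgeSet.ncard = Fintype.card V

/-- A connected graph on `n` vertices is bicyclic if it has exactly `n + 1` edges. -/
def Bicyclic (V : Type*) [Fintype V] (G : SimpleGraph V) : Prop :=
  G.Connected ∧ G.edgeSet.ncard = Fintype.card V + 1

/-- Two cycles are regarded as the same cycle when they have the same edge set. -/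
def SameCycle {V : Type*} [DecidableEq V] {G : SimpleGraph V} {u v : V}
    (c : G.Walk u u) (d : G.Walk v v) : Prop :=
  c.edges.toFinset = d.edges.toFinset

/-- A bicyclic graph is of ∞-type if its cycles are pairwise edge-disjoint. -/
def InfinityType {V : Type*} [DecidableEq V] (G : SimpleGraph V) : Prop :=
  ∀ (u v : V) (c : G.Walk u u) (d : G.Walk v v), c.IsCycle → d.IsCycle →
    ¬ SameCycle c d → ∀ e ∈ c.edges, e ∉ d.edges

/-- A bicyclic graph is of θ-type if it is not of ∞-type. -/
def ThetaType {V : Type*} [DecidableEq V] (G : SimpleGraph V) : Prop :=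
  ¬ InfinityType G

/-- `e` is a peg on the cycle `c`: either a chord of `c`, or an edge joining a vertex
of `c` to a vertex outside `c`. -/
def IsPeg {V : Type*} {G : SimpleGraph V} {u : V} (c : G.Walk u u) (e : Sym2 V) : Prop :=
  ∃ x y, e = s(x, y) ∧
    ((x ∈ c.support ∧ y ∈ c.support ∧ e ∉ c.edges) ∨ (x ∈ c.support ∧ y ∉ c.support))

/-- The number of pegs on the cycle `c` relative to the perfect matching `M`. -/
noncomputable def pegCount {V : Type*} {G : SimpleGraph V} {u : V} (c : G.Walk u u)
    (M : Finset (Sym2 V)) : ℕ :=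
  {e : Sym2 V | e ∈ M ∧ IsPeg c e}.ncard

/-- A path is mm-alternating relative to `M` if its edges alternately belong to `M`,
beginning and ending with edges of `M`. -/
def MMAlt {V : Type*} {G : SimpleGraph V} (M : Finset (Sym2 V)) {a b : V}
    (p : G.Walk a b) : Prop :=
  p.IsPath ∧ Odd p.length ∧
    ∀ (k : ℕ) (h : k < p.edges.length), (p.edges.get ⟨k, h⟩ ∈ M ↔ Even k)

/-! ### Forests -/

/-- Every nonempty vertex set of a forest contains a vertex with at most one neighbour inside the
set: an end of a longest path within it. -/
theorem exists_leaf {V : Type*} [Fintype V] {T : SimpleGraph V} (hT : T.IsAcyclic)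
    (S : Finset V) (hS : S.Nonempty) :
    ∃ v ∈ S, ∀ u ∈ S, ∀ w ∈ S, T.Adj v u → T.Adj v w → u = w := by
  classical
  let P : ℕ → Prop := fun n => ∃ (u v : V) (p : T.Walk u v), p.IsPath ∧
    (∀ x ∈ p.support, x ∈ S) ∧ p.length = n
  obtain ⟨s, hs⟩ := hS
  have h0 : P 0 := ⟨s, s, Walk.nil, Walk.IsPath.nil, by simpa using hs, rfl⟩
  have hspec : P (Nat.findGreatest P (Fintype.card V)) :=
    Nat.findGreatest_spec (Nat.zero_le _) h0
  obtain ⟨v, z, p, hp, hpS, hlen⟩ := hspec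
  refine ⟨v, hpS v p.start_mem_support, ?_⟩
  have key : ∀ u ∈ S, T.Adj v u → u = p.snd := by
    intro u hu huv
    by_cases hup : u ∈ p.support
    · exact hT.eq_snd_of_adj_start hp huv hup
    · exfalso
      have hq : (Walk.cons huv.symm p).IsPath := by
        rw [Walk.cons_isPath_iff]; exact ⟨hp, hup⟩
      have hP : P (p.length + 1) := ⟨u, z, Walk.cons huv.symm p, hq, by
        intro x hx
        rw [Walk.support_cons, List.mem_cons] at hx
        rcases hx with rfl | hx
        · exact hu
        · exact hpS x hx, by simp⟩
      have hlt : p.length + 1 < Fintype.card V := by simpa using hq.length_lt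
      have := Nat.le_findGreatest hlt.le hP
      omega
  intro u hu w hw h1 h2
  rw [key u hu h1, key w hw h2]

/-- In a forest, a permutation moving every vertex of a finite set `S` along an edge and
preserving `S` is determined on `S`: it swaps a leaf with its neighbour, and these two vertices
can be removed. -/
theorem forest_perm_unique {V : Type*} [Fintype V] [DecidableEq V] {T : SimpleGraph V}
    (hT : T.IsAcyclic) (σ τ : Equiv.Perm V) (S : Finset V)
    (hσ : ∀ v ∈ S, σ v ∈ S ∧ T.Adj v (σ v)) (hτ : ∀ v ∈ S, τ v ∈ S ∧ T.Adj v (τ v)) :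
    ∀ v ∈ S, σ v = τ v := by
  induction S using Finset.strongInduction with
  | H S ih =>
    rcases S.eq_empty_or_nonempty with rfl | hne
    · simp
    obtain ⟨v, hv, hleaf⟩ := exists_leaf hT S hne
    -- `v` is a leaf, so both its image and its preimage are its only neighbour
    have pre : ∀ ρ : Equiv.Perm V, (∀ v ∈ S, ρ v ∈ S ∧ T.Adj v (ρ v)) → ρ (ρ v) = v := by
      intro ρ hρ
      have hsurj : S.image ρ = S := by
        apply Finset.eq_of_subset_of_card_le
        · intro x hx
          obtain ⟨y, hy, rfl⟩ := Finset.mem_image.mp hx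
          exact (hρ y hy).1
        · rw [Finset.card_image_of_injective _ ρ.injective]
      obtain ⟨y, hy, hyv⟩ := Finset.mem_image.mp (hsurj.symm ▸ hv : v ∈ S.image ρ)
      have h1 : y = ρ v := hleaf y hy _ (hρ v hv).1 (by
        have := (hρ y hy).2
        rw [hyv] at this
        exact this.symm) (hρ v hv).2
      rw [← h1, hyv]
    have hu : σ v = τ v := hleaf _ (hσ v hv).1 _ (hτ v hv).1 (hσ v hv).2 (hτ v hv).2
    have e1 := pre σ hσ
    have e2 := pre τ hτ
    have rest : ∀ ρ : Equiv.Perm V, (∀ v ∈ S, ρ v ∈ S ∧ T.Adj v (ρ v)) →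
        ∀ w ∈ (S.erase v).erase (ρ v), ρ w ∈ (S.erase v).erase (ρ v) ∧ T.Adj w (ρ w) := by
      intro ρ hρ w hw
      have e := pre ρ hρ
      simp only [Finset.mem_erase] at hw ⊢
      refine ⟨⟨fun h => hw.2.1 (ρ.injective h), fun h => hw.1 ?_, (hρ w hw.2.2).1⟩,
        (hρ w hw.2.2).2⟩
      apply ρ.injective
      rw [h, e]
    have IH := ih ((S.erase v).erase (σ v))
      (lt_of_le_of_lt (Finset.erase_subset _ _) (Finset.erase_ssubset hv)) (rest σ hσ)
      (by rw [hu]; exact rest τ hτ)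
    intro w hw
    by_cases h1 : w = v
    · rw [h1, hu]
    by_cases h2 : w = σ v
    · rw [h2, e1, hu, e2]
    · exact IH w (by simp [h1, h2, hw])

/-- On a forest the weights of `A` are a coboundary: they come from a nowhere vanishing potential
`d`. The set `S` allows induction by removing leaves. -/
theorem exists_gauge {V : Type*} [Fintype V] [DecidableEq V] {T : SimpleGraph V}
    (hT : T.IsAcyclic) (A : Matrix V V ℂ)
    (hA : ∀ u v, T.Adj u v → A u v * A v u = 1) (S : Finset V) :
    ∃ d : V → ℂ, (∀ v, d v ≠ 0) ∧
      ∀ u ∈ S, ∀ v ∈ S, T.Adj u v → A u v * d v = d u := by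
  induction S using Finset.strongInduction with
  | H S ih =>
    rcases S.eq_empty_or_nonempty with rfl | hne
    · exact ⟨fun _ => 1, by simp, by simp⟩
    obtain ⟨x, hx, hleaf⟩ := exists_leaf hT S hne
    obtain ⟨d, hd0, hd⟩ := ih (S.erase x) (Finset.erase_ssubset hx)
    by_cases hn : ∃ y ∈ S, T.Adj x y
    · obtain ⟨y, hy, hxy⟩ := hn
      have hyx : y ≠ x := hxy.ne'
      have hAxy : A x y ≠ 0 := left_ne_zero_of_mul_eq_one (hA x y hxy)
      refine ⟨Function.update d x (A x y * d y), ?_, ?_⟩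
      · intro v
        by_cases h : v = x
        · subst h; simpa using ⟨hAxy, hd0 y⟩
        · simpa [h] using hd0 v
      · intro u hu v hv huv
        by_cases h1 : u = x
        · subst h1
          have := hleaf v hv y hy huv hxy
          subst this
          simp [hyx]
        by_cases h2 : v = x
        · subst h2
          have := hleaf u hu y hy huv.symm hxy
          subst this
          simp only [Function.update_self, Function.update_of_ne h1]
          rw [← mul_assoc, hA _ _ huv, one_mul]
        · simp only [Function.update_of_ne h1, Function.update_of_ne h2]
          exact hd u (by simp [h1, hu]) v (by simp [h2, hv]) huv
    · push Not at hn
      refine ⟨d, hd0, fun u hu v hv huv => hd u ?_ v ?_ huv⟩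
      · exact Finset.mem_erase.mpr ⟨fun h => hn v hv (h ▸ huv), hu⟩
      · exact Finset.mem_erase.mpr ⟨fun h => hn u hu (h ▸ huv.symm), hv⟩

/-- A finite set carrying a fixed-point-free involution has even cardinality. -/
theorem even_card_of_fpf {V : Type*} [DecidableEq V] (s : Finset V) (f : V → V)
    (h1 : ∀ v ∈ s, f v ∈ s) (h2 : ∀ v ∈ s, f v ≠ v) (h3 : ∀ v ∈ s, f (f v) = v) :
    Even s.card := by
  have := Finset.prod_involution (s := s) (f := fun _ => (-1 : ℤ)) (fun a _ => f a)
    (by simp) (fun a ha _ => h2 a ha) (fun a ha => h1 a ha) (fun a ha => h3 a ha)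
  rw [Finset.prod_const] at this
  exact (neg_one_pow_eq_one_iff_even (by norm_num)).mp this

/-! ### Principal minors and perfect matchings -/

/-- Perfect matchings of `U - F`, encoded as permutations of the whole vertex set: involutions
that fix `F` pointwise and move every other vertex along an edge of `U`. -/
noncomputable def matchSet {V : Type*} [Fintype V] [DecidableEq V] (U : SimpleGraph V)
    (F : Finset V) : Finset (Equiv.Perm V) :=
  open scoped Classical in
  Finset.univ.filter fun σ =>
    (∀ v ∈ F, σ v = v) ∧ (∀ v, v ∉ F → U.Adj v (σ v)) ∧ ∀ v, σ (σ v) = v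

theorem mem_matchSet {V : Type*} [Fintype V] [DecidableEq V] {U : SimpleGraph V}
    {F : Finset V} {σ : Equiv.Perm V} : σ ∈ matchSet U F ↔
    (∀ v ∈ F, σ v = v) ∧ (∀ v, v ∉ F → U.Adj v (σ v)) ∧ ∀ v, σ (σ v) = v := by
  simp [matchSet]

/-- The matrix `A` with the rows indexed by `F` replaced by rows of the identity matrix. Its
determinant is the principal minor of `A` on the complement of `F`. -/
def frozenRows {V : Type*} [DecidableEq V] (A : Matrix V V ℂ) (F : Finset V) : Matrix V V ℂ :=
  fun v u => if v ∈ F then (if v = u then 1 else 0) else A v u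

theorem mem_matchSet_stable {V : Type*} [Fintype V] [DecidableEq V] {F : Finset V}
    {σ : Equiv.Perm V} (h : ∀ v ∈ F, σ v = v) {v : V} (hv : v ∉ F) : σ v ∉ F := fun h' =>
  hv (by have := σ.injective (h _ h'); rwa [this] at h')

theorem prod_frozen_eq_zero {V : Type*} [Fintype V] [DecidableEq V] (A : Matrix V V ℂ)
    (F : Finset V) (σ : Equiv.Perm V) (h : ¬ ∀ v ∈ F, σ v = v) :
    ∏ v, frozenRows A F v (σ v) = 0 := by
  push Not at h
  obtain ⟨v, hv, hne⟩ := h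
  exact Finset.prod_eq_zero (Finset.mem_univ v) (by simp [frozenRows, hv, hne.symm])

/-- Terms of the Leibniz expansion for `σ` and `σ⁻¹` are complex conjugate. -/
theorem conj_prod_frozen {V : Type*} [Fintype V] [DecidableEq V] (A : Matrix V V ℂ)
    (hA : A.IsHermitian) (F : Finset V) (σ : Equiv.Perm V) :
    (starRingEnd ℂ) (∏ v, frozenRows A F v (σ v)) = ∏ v, frozenRows A F v (σ⁻¹ v) := by
  by_cases h : ∀ v ∈ F, σ v = v
  · rw [← Equiv.prod_comp σ (fun v => frozenRows A F v (σ⁻¹ v)), map_prod]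
    refine Finset.prod_congr rfl fun v _ => ?_
    have hinv : σ⁻¹ (σ v) = v := by simp
    rw [hinv]
    by_cases hv : v ∈ F
    · simp [frozenRows, hv, h v hv]
    · have := mem_matchSet_stable h hv
      simp only [frozenRows, hv, this, if_false]
      exact hA.apply (σ v) v
  · have h' : ¬ ∀ v ∈ F, σ⁻¹ v = v := fun h' => h fun v hv => by
      conv_lhs => rw [← h' v hv]
      simp
    rw [prod_frozen_eq_zero A F σ h, prod_frozen_eq_zero A F _ h', map_zero]

/-- The Leibniz term of a perfect matching is `1` up to the sign of the permutation: each matching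
edge contributes `A u v * A v u`. -/
theorem prod_frozen_matching {V : Type*} [Fintype V] [DecidableEq V] {U : SimpleGraph V}
    {A : Matrix V V ℂ} (hunit : ∀ u v, U.Adj u v → A u v * A v u = 1) {F : Finset V}
    {σ : Equiv.Perm V} (hσ : σ ∈ matchSet U F) :
    ∏ v, frozenRows A F v (σ v) = 1 := by
  obtain ⟨h1, h2, h3⟩ := mem_matchSet.mp hσ
  refine Finset.prod_involution (fun v _ => σ v) ?_ ?_ (by simp) (fun v _ => h3 v)
  · intro v _
    by_cases hv : v ∈ F
    · simp [frozenRows, hv, h1 v hv]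
    · have := mem_matchSet_stable h1 hv
      simp only [frozenRows, hv, this, if_false, h3]
      exact hunit _ _ (h2 v hv)
  · intro v _ hne
    by_cases hv : v ∈ F
    · simp [frozenRows, hv, h1 v hv] at hne
    · exact (h2 v hv).ne'

theorem sign_matching {V : Type*} [Fintype V] [DecidableEq V] {U : SimpleGraph V}
    {F : Finset V} {σ : Equiv.Perm V} (hσ : σ ∈ matchSet U F) :
    Equiv.Perm.sign σ = (-1) ^ ((Fintype.card V - F.card) / 2) := by
  obtain ⟨h1, h2, h3⟩ := mem_matchSet.mp hσ
  rw [Equiv.Perm.sign_of_pow_two_eq_one (by ext v; simp [pow_two, h3])]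
  congr 3
  rw [← Fintype.card_coe]
  refine Fintype.card_congr (Equiv.subtypeEquivRight fun v => ?_)
  by_cases hv : v ∈ F
  · simp [Function.IsFixedPt, hv, h1 v hv]
  · simp [Function.IsFixedPt, hv, (h2 v hv).ne']

theorem matchSet_even {V : Type*} [Fintype V] [DecidableEq V] {U : SimpleGraph V}
    {F : Finset V} {σ : Equiv.Perm V} (hσ : σ ∈ matchSet U F) :
    Even (Fintype.card V - F.card) := by
  obtain ⟨h1, h2, h3⟩ := mem_matchSet.mp hσ
  rw [← Finset.card_compl]
  refine even_card_of_fpf _ σ (fun v hv => ?_) (fun v hv => ?_) (fun v _ => h3 v)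
  · simp only [Finset.mem_compl] at *
    exact mem_matchSet_stable h1 hv
  · exact (h2 v (by simpa using hv)).symm.ne

/-- The weights of `A` on `U` in normal form: up to the diagonal gauge `d` they are `1` on the
forest `T`, and the only further edge `ab` of `U` carries the weight `ω = ±i`. -/
structure Gauged {V : Type*} (U T : SimpleGraph V) (A : Matrix V V ℂ) (a b : V)
    (d : V → ℂ) (ω : ℂ) : Prop where
  herm : A.IsHermitian
  zero : ∀ u v, ¬ U.Adj u v → A u v = 0
  unit : ∀ u v, U.Adj u v → A u v * A v u = 1
  acyclic : T.IsAcyclic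
  cover : ∀ u v, U.Adj u v → T.Adj u v ∨ (u = a ∧ v = b) ∨ (u = b ∧ v = a)
  ne : a ≠ b
  adj : U.Adj a b
  d_ne : ∀ v, d v ≠ 0
  gauge : ∀ u v, T.Adj u v → A u v * d v = d u
  edge : A a b * d b = ω * d a
  omega : ω = Complex.I ∨ ω = -Complex.I

/-- A permutation moving vertices outside `F` along edges of `U` that is not an involution uses the
edge `ab` in exactly one direction; otherwise it would be an involution by uniqueness on a forest. -/
theorem exactly_one_direction {V : Type*} [Fintype V] [DecidableEq V] {U T : SimpleGraph V}
    {a b : V} (hT : T.IsAcyclic)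
    (cover : ∀ u v, U.Adj u v → T.Adj u v ∨ (u = a ∧ v = b) ∨ (u = b ∧ v = a)) {F : Finset V}
    {σ : Equiv.Perm V} (h1 : ∀ v ∈ F, σ v = v) (h2 : ∀ v, v ∉ F → U.Adj v (σ v))
    (h3 : ¬ ∀ v, σ (σ v) = v) : (σ a = b ∧ σ b ≠ a) ∨ (σ a ≠ b ∧ σ b = a) := by
  have main : ∀ S : Finset V, (∀ v ∈ S, σ v ∈ S ∧ T.Adj v (σ v)) → ∀ v ∈ S, σ (σ v) = v := by
    intro S hS v hv
    have hsurj : S.image σ = S := by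
      apply Finset.eq_of_subset_of_card_le
      · intro x hx
        obtain ⟨y, hy, rfl⟩ := Finset.mem_image.mp hx
        exact (hS y hy).1
      · rw [Finset.card_image_of_injective _ σ.injective]
    have := forest_perm_unique hT σ σ⁻¹ S hS (fun w hw => by
      obtain ⟨y, hy, rfl⟩ := Finset.mem_image.mp (hsurj.symm ▸ hw : w ∈ S.image σ)
      simpa using ⟨hy, (hS y hy).2.symm⟩) v hv
    rw [this]; simp
  by_contra hcon
  apply h3
  by_cases hab : σ a = b
  · have hba : σ b = a := by tauto
    intro v
    by_cases hv : v ∈ F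
    · rw [h1 v hv, h1 v hv]
    by_cases hva : v = a
    · rw [hva, hab, hba]
    by_cases hvb : v = b
    · rw [hvb, hba, hab]
    refine main ((Fᶜ.erase a).erase b) (fun w hw => ?_) v (by simp [hv, hva, hvb])
    simp only [Finset.mem_erase, Finset.mem_compl] at hw ⊢
    refine ⟨⟨fun h => hw.2.1 (σ.injective (h.trans hab.symm)),
      fun h => hw.1 (σ.injective (h.trans hba.symm)), mem_matchSet_stable h1 hw.2.2⟩, ?_⟩
    have := cover _ _ (h2 w hw.2.2)
    tauto
  · have hba : σ b ≠ a := by tauto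
    intro v
    by_cases hv : v ∈ F
    · rw [h1 v hv, h1 v hv]
    refine main Fᶜ (fun w hw => ?_) v (by simp [hv])
    simp only [Finset.mem_compl] at hw ⊢
    refine ⟨mem_matchSet_stable h1 hw, ?_⟩
    rcases cover _ _ (h2 w hw) with h | ⟨rfl, h⟩ | ⟨rfl, h⟩
    · exact h
    · exact absurd h hab
    · exact absurd h hba

/-- A Leibniz term that is not a perfect matching is purely imaginary. -/
theorem prod_frozen_re {V : Type*} [Fintype V] [DecidableEq V] {U T : SimpleGraph V}
    {A : Matrix V V ℂ} {a b : V} {d : V → ℂ} {ω : ℂ} (hG : Gauged U T A a b d ω)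
    {F : Finset V} {σ : Equiv.Perm V} (hσ : σ ∉ matchSet U F) :
    (∏ v, frozenRows A F v (σ v)).re = 0 := by
  by_cases h1 : ∀ v ∈ F, σ v = v
  swap
  · rw [prod_frozen_eq_zero A F σ h1, Complex.zero_re]
  by_cases h2 : ∀ v, v ∉ F → U.Adj v (σ v)
  swap
  · push Not at h2
    obtain ⟨v, hv, hna⟩ := h2
    rw [Finset.prod_eq_zero (Finset.mem_univ v) (by simp [frozenRows, hv, hG.zero _ _ hna]),
      Complex.zero_re]
  have h3 : ¬ ∀ v, σ (σ v) = v := fun h3 => hσ (mem_matchSet.mpr ⟨h1, h2, h3⟩)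
  -- removing the gauge leaves the product unchanged and makes all factors but one equal to `1`
  have hgauge : ∏ v, frozenRows A F v (σ v) =
      ∏ v, ((d v)⁻¹ * (frozenRows A F v (σ v) * d (σ v))) := by
    rw [Finset.prod_mul_distrib, Finset.prod_mul_distrib, Equiv.prod_comp σ d,
      Finset.prod_inv_distrib]
    have : ∏ v, d v ≠ 0 := Finset.prod_ne_zero_iff.mpr fun v _ => hG.d_ne v
    field_simp
  have hone : ∀ v, ¬ (v = a ∧ σ v = b) → ¬ (v = b ∧ σ v = a) →
      (d v)⁻¹ * (frozenRows A F v (σ v) * d (σ v)) = 1 := by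
    intro v ha hb
    by_cases hv : v ∈ F
    · simp [frozenRows, hv, h1 v hv, hG.d_ne v]
    · have hT : T.Adj v (σ v) := by have := hG.cover _ _ (h2 v hv); tauto
      simp only [frozenRows, hv, if_false, hG.gauge _ _ hT]
      exact inv_mul_cancel₀ (hG.d_ne v)
  have hω : ω * ω = -1 := by rcases hG.omega with h | h <;> simp [h]
  have hω0 : ω.re = 0 := by rcases hG.omega with h | h <;> simp [h]
  have hF : ∀ v, σ v ≠ v → v ∉ F := fun v hne hv => hne (h1 v hv)
  rw [hgauge]
  rcases exactly_one_direction hG.acyclic hG.cover h1 h2 h3 with ⟨hab, hba⟩ | ⟨hab, hba⟩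
  · rw [Finset.prod_eq_single a (fun v _ hv => hone v (by tauto) (by rintro ⟨rfl, h⟩; tauto))
      (by simp)]
    have : a ∉ F := hF a (by rw [hab]; exact hG.ne.symm)
    simp only [frozenRows, this, if_false, hab, hG.edge]
    rw [mul_comm ω, inv_mul_cancel_left₀ (hG.d_ne a), hω0]
  · rw [Finset.prod_eq_single b (fun v _ hv => hone v (by rintro ⟨rfl, h⟩; tauto) (by tauto))
      (by simp)]
    have : b ∉ F := hF b (by rw [hba]; exact hG.ne)
    simp only [frozenRows, this, if_false, hba]
    have hrev : A b a * d a = -ω * d b := by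
      have e1 := hG.edge
      have e2 := hG.unit _ _ hG.adj
      linear_combination (A b a * d a) * hω + ω * A b a * e1 - ω * d b * e2
    rw [hrev, mul_comm (-ω), inv_mul_cancel_left₀ (hG.d_ne b), Complex.neg_re, hω0, neg_zero]

/-- The principal minor of `A` off `F` counts, up to sign, the perfect matchings of `U - F`: the
contributions of the cycle in its two directions are conjugate and purely imaginary. -/
theorem det_frozenRows {V : Type*} [Fintype V] [DecidableEq V] {U T : SimpleGraph V}
    {A : Matrix V V ℂ} {a b : V} {d : V → ℂ} {ω : ℂ} (hG : Gauged U T A a b d ω)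
    (F : Finset V) : (frozenRows A F).det =
      (-1) ^ ((Fintype.card V - F.card) / 2) * ((matchSet U F).card : ℂ) := by
  have hdet : (frozenRows A F).det = ∑ σ : Equiv.Perm V,
      ((Equiv.Perm.sign σ : ℤ) : ℂ) * ∏ v, frozenRows A F v (σ v) := by
    rw [← Matrix.det_transpose, Matrix.det_apply']
    rfl
  have hreal : (starRingEnd ℂ) (frozenRows A F).det = (frozenRows A F).det := by
    rw [hdet, map_sum, ← Equiv.sum_comp (Equiv.inv (Equiv.Perm V))]
    refine Finset.sum_congr rfl fun σ _ => ?_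
    rw [map_mul, conj_prod_frozen A hG.herm]
    simp
  have hre : (frozenRows A F).det.re =
      (-1) ^ ((Fintype.card V - F.card) / 2) * ((matchSet U F).card : ℝ) := by
    rw [hdet, Complex.re_sum]
    have : ∀ σ : Equiv.Perm V,
        (((Equiv.Perm.sign σ : ℤ) : ℂ) * ∏ v, frozenRows A F v (σ v)).re =
        if σ ∈ matchSet U F then (-1) ^ ((Fintype.card V - F.card) / 2) else 0 := by
      intro σ
      split_ifs with hσ
      · rw [prod_frozen_matching hG.unit hσ, sign_matching hσ]
        push_cast
        rw [mul_one]
        rcases Nat.even_or_odd ((Fintype.card V - F.card) / 2) with h | h <;>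
          simp [h.neg_one_pow]
      · have := prod_frozen_re hG hσ
        rw [← Complex.ofReal_intCast, Complex.re_ofReal_mul, this, mul_zero]
    simp only [this]
    rw [Finset.sum_ite_mem, Finset.univ_inter, Finset.sum_const, nsmul_eq_mul, mul_comm]
  rw [← Complex.conj_eq_iff_re.mp hreal, hre]
  push_cast
  rfl

/-! ### The unique cycle -/

theorem deleteEdge_acyclic {V : Type*} [DecidableEq V] {U : SimpleGraph V} {v₀ : V}
    {Γ : U.Walk v₀ v₀}
    (huniq : ∀ (v : V) (d : U.Walk v v), d.IsCycle → SameCycle d Γ) {e : Sym2 V}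
    (he : e ∈ Γ.edges) : (U.deleteEdges {e}).IsAcyclic := by
  intro v c hc
  have h := huniq v (c.mapLe (deleteEdges_le _)) (hc.mapLe _)
  have h1 : e ∈ (c.mapLe (deleteEdges_le {e})).edges.toFinset := by
    rw [h]; simpa using he
  rw [List.mem_toFinset, Walk.edges_mapLe_eq_edges] at h1
  have := c.edges_subset_edgeSet h1
  simp at this

theorem deleteEdge_cover {V : Type*} {U : SimpleGraph V} {a b u v : V} (h : U.Adj u v) :
    (U.deleteEdges {s(a, b)}).Adj u v ∨ (u = a ∧ v = b) ∨ (u = b ∧ v = a) := by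
  rw [deleteEdges_adj, Set.mem_singleton_iff, Sym2.eq_iff]
  tauto

/-- An edge that is not a bridge lies on a cycle, hence on the only one. -/
theorem mem_edges_of_reachable {V : Type*} [DecidableEq V] {U : SimpleGraph V} {v₀ : V}
    {Γ : U.Walk v₀ v₀}
    (huniq : ∀ (v : V) (d : U.Walk v v), d.IsCycle → SameCycle d Γ) {u v : V}
    (h : U.Adj u v) (hr : (U.deleteEdges {s(u, v)}).Reachable u v) : s(u, v) ∈ Γ.edges := by
  obtain ⟨w, p, hp, hmem⟩ := adj_and_reachable_delete_edges_iff_exists_cycle.mp ⟨h, hr⟩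
  have := huniq w p hp
  rw [← List.mem_toFinset, ← this]
  simpa using hmem

theorem reachable_on_cycle {V : Type*} [DecidableEq V] {U : SimpleGraph V} {v₀ : V}
    (Γ : U.Walk v₀ v₀) {e : Sym2 V} (he : e ∉ Γ.edges) {u v : V} (hu : u ∈ Γ.support)
    (hv : v ∈ Γ.support) : (U.deleteEdges {e}).Reachable u v := by
  have key : ∀ w ∈ Γ.support, (U.deleteEdges {e}).Reachable v₀ w := by
    intro w hw
    refine ⟨(Γ.takeUntil w hw).transfer _ fun f hf => ?_⟩
    rw [edgeSet_deleteEdges]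
    refine ⟨(Γ.takeUntil w hw).edges_subset_edgeSet hf, ?_⟩
    rintro rfl
    exact he (Γ.edges_takeUntil_subset_edges hw hf)
  exact (key u hu).symm.trans (key v hv)

/-- The gauge telescopes along a walk inside the forest. -/
theorem walkWeight_gauge {V : Type*} {U T : SimpleGraph V} (A : Matrix V V ℂ) (d : V → ℂ)
    (hd : ∀ u v, T.Adj u v → A u v * d v = d u) {u v : V} (p : U.Walk u v)
    (hp : ∀ e ∈ p.edges, e ∈ T.edgeSet) : walkWeight A p * d v = d u := by
  induction p with
  | nil => simp [walkWeight]
  | @cons u v w h p ih =>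
    have h1 := ih fun e he => hp e (by simp [he])
    have h2 := hd _ _ (hp s(u, v) (by simp))
    have : walkWeight A (Walk.cons h p) = A u v * walkWeight A p := by simp [walkWeight]
    rw [this, mul_assoc, h1, h2]

/-- Deleting the first edge of the cycle leaves a forest; after gauging, the deleted edge carries
the whole weight of the cycle. -/
theorem exists_gauged {V : Type*} [Fintype V] [DecidableEq V] {U : SimpleGraph V}
    {A : Matrix V V ℂ} (hA : ThreeColored U A) {v₀ : V} {Γ : U.Walk v₀ v₀} (hΓ : Γ.IsCycle)
    (hw : walkWeight A Γ ∈ ({Complex.I, -Complex.I} : Set ℂ))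
    (huniq : ∀ (v : V) (d : U.Walk v v), d.IsCycle → SameCycle d Γ) :
    ∃ (T : SimpleGraph V) (a b : V) (d : V → ℂ) (ω : ℂ), Gauged U T A a b d ω := by
  obtain ⟨hherm, hdiag, hedge, hnon⟩ := hA
  have hunit : ∀ u v, U.Adj u v → A u v * A v u = 1 := by
    intro u v h
    rw [← hherm.apply v u]
    rcases hedge u v h with h | h | h | h <;> rw [h] <;> simp
  cases Γ with
  | nil => simp at hΓ
  | @cons _ b _ h p =>
    have hac := deleteEdge_acyclic huniq (e := s(v₀, b)) (by simp)
    obtain ⟨d, hd0, hd⟩ := exists_gauge hac A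
      (fun u v huv => hunit u v (deleteEdges_le _ huv)) Finset.univ
    have hd' : ∀ u v, (U.deleteEdges {s(v₀, b)}).Adj u v → A u v * d v = d u :=
      fun u v => hd u (Finset.mem_univ _) v (Finset.mem_univ _)
    rw [Walk.cons_isCycle_iff] at hΓ
    have hp := walkWeight_gauge A d hd' p (fun e he => by
      rw [edgeSet_deleteEdges]
      refine ⟨p.edges_subset_edgeSet he, ?_⟩
      rintro rfl
      exact hΓ.2 he)
    refine ⟨_, v₀, b, d, walkWeight A (Walk.cons h p),
      { herm := hherm
        zero := fun u v huv => by
          by_cases h : u = v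
          · rw [h, hdiag]
          · exact hnon u v h huv
        unit := hunit
        acyclic := hac
        cover := fun u v huv => deleteEdge_cover huv
        ne := h.ne
        adj := h
        d_ne := hd0
        gauge := hd'
        edge := ?_
        omega := hw }⟩
    have : walkWeight A (Walk.cons h p) = A v₀ b * walkWeight A p := by simp [walkWeight]
    rw [this, mul_assoc, hp]

/-- Of two distinct perfect matchings of `U - F`, exactly one contains a given edge of the
cycle: otherwise both would be determined by the forest left after deleting that edge. -/
theorem exactly_one_matching {V : Type*} [Fintype V] [DecidableEq V] {U : SimpleGraph V}
    {v₀ : V} {Γ : U.Walk v₀ v₀}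
    (huniq : ∀ (v : V) (d : U.Walk v v), d.IsCycle → SameCycle d Γ) {F : Finset V}
    {σ τ : Equiv.Perm V} (hσ : σ ∈ matchSet U F) (hτ : τ ∈ matchSet U F) (hne : σ ≠ τ)
    {a b : V} (hab : s(a, b) ∈ Γ.edges) : (σ a = b ∧ τ a ≠ b) ∨ (σ a ≠ b ∧ τ a = b) := by
  have hT := deleteEdge_acyclic huniq hab
  by_contra hcon
  apply hne
  ext v
  have hs := (mem_matchSet.mp hσ)
  have ht := (mem_matchSet.mp hτ)
  by_cases hv : v ∈ F
  · rw [hs.1 v hv, ht.1 v hv]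
  have adjT : ∀ ρ ∈ matchSet U F, ∀ w, w ∉ F → ¬ (w = a ∧ ρ w = b) → ¬ (w = b ∧ ρ w = a) →
      (U.deleteEdges {s(a, b)}).Adj w (ρ w) := by
    intro ρ hρ w hw h1 h2
    have := deleteEdge_cover (a := a) (b := b) ((mem_matchSet.mp hρ).2.1 w hw)
    tauto
  by_cases h1 : σ a = b
  · have h2 : τ a = b := by tauto
    have h1' : σ b = a := by rw [← h1, hs.2.2]
    have h2' : τ b = a := by rw [← h2, ht.2.2]
    by_cases hva : v = a
    · rw [hva, h1, h2]
    by_cases hvb : v = b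
    · rw [hvb, h1', h2']
    have key : ∀ ρ ∈ matchSet U F, ρ a = b → ρ b = a → ∀ w ∈ (Fᶜ.erase a).erase b,
        ρ w ∈ (Fᶜ.erase a).erase b ∧ (U.deleteEdges {s(a, b)}).Adj w (ρ w) := by
      intro ρ hρ e1 e2 w hw
      simp only [Finset.mem_erase, Finset.mem_compl] at hw ⊢
      exact ⟨⟨fun h => hw.2.1 (ρ.injective (h.trans e1.symm)),
        fun h => hw.1 (ρ.injective (h.trans e2.symm)),
        mem_matchSet_stable (mem_matchSet.mp hρ).1 hw.2.2⟩,
        adjT ρ hρ w hw.2.2 (by tauto) (by tauto)⟩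
    exact forest_perm_unique hT σ τ _ (key σ hσ h1 h1') (key τ hτ h2 h2') v
      (by simp [hv, hva, hvb])
  · have h2 : τ a ≠ b := by tauto
    have key : ∀ ρ ∈ matchSet U F, ρ a ≠ b → ∀ w ∈ Fᶜ,
        ρ w ∈ Fᶜ ∧ (U.deleteEdges {s(a, b)}).Adj w (ρ w) := by
      intro ρ hρ e1 w hw
      simp only [Finset.mem_compl] at hw ⊢
      refine ⟨mem_matchSet_stable (mem_matchSet.mp hρ).1 hw, adjT ρ hρ w hw ?_ ?_⟩
      · rintro ⟨rfl, h⟩; exact e1 h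
      · rintro ⟨rfl, h⟩; exact e1 (by rw [← h, (mem_matchSet.mp hρ).2.2])
    exact forest_perm_unique hT σ τ _ (key σ hσ h1) (key τ hτ h2) v (by simp [hv])

theorem two_cycle_neighbors {V : Type*} {U : SimpleGraph V} {v₀ : V} {Γ : U.Walk v₀ v₀}
    (hΓ : Γ.IsCycle) {v : V} (hv : v ∈ Γ.support) :
    ∃ u w, u ≠ w ∧ s(v, u) ∈ Γ.edges ∧ s(v, w) ∈ Γ.edges := by
  obtain ⟨u, w, hne, h⟩ := Set.ncard_eq_two.mp (hΓ.ncard_neighborSet_toSubgraph_eq_two hv)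
  have hu : u ∈ Γ.toSubgraph.neighborSet v := by rw [h]; simp
  have hw : w ∈ Γ.toSubgraph.neighborSet v := by rw [h]; simp
  exact ⟨u, w, hne, (Walk.mem_edges_toSubgraph Γ).mp (Subgraph.mem_edgeSet.mpr hu),
    (Walk.mem_edges_toSubgraph Γ).mp (Subgraph.mem_edgeSet.mpr hw)⟩

/-- Two distinct perfect matchings of `U - F` are both perfect on the cycle, which avoids `F`. -/
theorem cycle_stable {V : Type*} [Fintype V] [DecidableEq V] {U : SimpleGraph V}
    {v₀ : V} {Γ : U.Walk v₀ v₀} (hΓ : Γ.IsCycle)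
    (huniq : ∀ (v : V) (d : U.Walk v v), d.IsCycle → SameCycle d Γ) {F : Finset V}
    {σ τ : Equiv.Perm V} (hσ : σ ∈ matchSet U F) (hτ : τ ∈ matchSet U F) (hne : σ ≠ τ)
    {v : V} (hv : v ∈ Γ.support) : v ∉ F ∧ σ v ∈ Γ.support ∧ σ v ≠ τ v := by
  obtain ⟨u, w, huw, hu, hw⟩ := two_cycle_neighbors hΓ hv
  have h1 := exactly_one_matching huniq hσ hτ hne hu
  have h2 := exactly_one_matching huniq hσ hτ hne hw
  have hu' := Γ.snd_mem_support_of_mem_edges hu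
  have hw' := Γ.snd_mem_support_of_mem_edges hw
  have hns : σ v ≠ τ v := by
    rcases h1 with ⟨h, h'⟩ | ⟨h, h'⟩
    · rw [h]; exact fun h'' => h' h''.symm
    · rw [h']; exact h
  refine ⟨fun hF => hns ?_, ?_, hns⟩
  · rw [(mem_matchSet.mp hσ).1 v hF, (mem_matchSet.mp hτ).1 v hF]
  · rcases h1 with ⟨h, h'⟩ | ⟨h, h'⟩
    · rw [h]; exact hu'
    · rcases h2 with ⟨k, k'⟩ | ⟨k, k'⟩
      · rw [k]; exact hw'
      · exact False.elim (huw (Eq.trans h'.symm k' : u = w))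

/-! ### Perfect matchings as involutions, and pegs -/

/-- The edge set of a perfect matching given as an involution. -/
def edgesOf {V : Type*} [Fintype V] [DecidableEq V] (σ : Equiv.Perm V) : Finset (Sym2 V) :=
  Finset.univ.image fun v => s(v, σ v)

theorem mem_edgesOf {V : Type*} [Fintype V] [DecidableEq V] {σ : Equiv.Perm V}
    (hσ : ∀ v, σ (σ v) = v) {u v : V} : s(u, v) ∈ edgesOf σ ↔ σ u = v := by
  simp only [edgesOf, Finset.mem_image, Finset.mem_univ, true_and, Sym2.eq_iff]
  constructor
  · rintro ⟨w, ⟨rfl, h⟩ | ⟨rfl, rfl⟩⟩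
    · exact h
    · exact hσ _
  · exact fun h => ⟨u, Or.inl ⟨rfl, h⟩⟩

theorem isPM_edgesOf {V : Type*} [Fintype V] [DecidableEq V] {U : SimpleGraph V}
    {σ : Equiv.Perm V} (hσ : σ ∈ matchSet U ∅) : IsPM U (edgesOf σ) := by
  obtain ⟨-, h2, h3⟩ := mem_matchSet.mp hσ
  constructor
  · intro e he
    induction e with
    | _ u v =>
      rw [mem_edgesOf h3] at he
      subst he
      exact h2 u (by simp)
  · intro v
    rw [Finset.card_eq_one]
    refine ⟨s(v, σ v), ?_⟩
    ext e
    simp only [Finset.mem_filter, Finset.mem_singleton]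
    constructor
    · rintro ⟨he, hv⟩
      obtain ⟨w, rfl⟩ := Sym2.mem_iff_exists.mp hv
      rw [mem_edgesOf h3] at he
      rw [he]
    · rintro rfl
      exact ⟨(mem_edgesOf h3).mpr rfl, Sym2.mem_mk_left _ _⟩

theorem exists_perm_of_isPM {V : Type*} [Fintype V] [DecidableEq V] {U : SimpleGraph V}
    {M : Finset (Sym2 V)} (hM : IsPM U M) : ∃ σ ∈ matchSet U ∅, edgesOf σ = M := by
  obtain ⟨h1, h2⟩ := hM
  have hex : ∀ v, ∃ w, ∀ u, s(v, u) ∈ M ↔ u = w := by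
    intro v
    obtain ⟨e, he⟩ := Finset.card_eq_one.mp (h2 v)
    have hmem : e ∈ M.filter (fun e => v ∈ e) := by rw [he]; simp
    obtain ⟨w, rfl⟩ := Sym2.mem_iff_exists.mp (Finset.mem_filter.mp hmem).2
    refine ⟨w, fun u => ⟨fun hu => ?_, ?_⟩⟩
    · have : s(v, u) ∈ M.filter (fun e => v ∈ e) := by simp [hu]
      rw [he, Finset.mem_singleton] at this
      exact Sym2.congr_right.mp this
    · rintro rfl
      exact (Finset.mem_filter.mp hmem).1
  choose f hf using hex
  have hinv : Function.Involutive f := by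
    intro v
    have : s(v, f v) ∈ M := (hf v _).mpr rfl
    rw [Sym2.eq_swap] at this
    exact ((hf _ _).mp this).symm
  refine ⟨hinv.toPerm f, mem_matchSet.mpr ⟨by simp, fun v _ => ?_, fun v => hinv v⟩, ?_⟩
  · exact h1 _ ((hf v _).mpr rfl)
  · ext e
    induction e with
    | _ u v =>
      rw [mem_edgesOf (fun v => hinv v), hf]
      exact eq_comm

theorem edgesOf_injOn {V : Type*} [Fintype V] [DecidableEq V] {U : SimpleGraph V}
    {F : Finset V} {σ τ : Equiv.Perm V} (hσ : σ ∈ matchSet U F) (hτ : τ ∈ matchSet U F)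
    (h : edgesOf σ = edgesOf τ) : σ = τ := by
  ext v
  have : s(v, σ v) ∈ edgesOf τ := by
    rw [← h]; exact (mem_edgesOf (mem_matchSet.mp hσ).2.2).mpr rfl
  exact ((mem_edgesOf (mem_matchSet.mp hτ).2.2).mp this).symm

/-- The vertices of the cycle that the matching `m` joins to a vertex off the cycle. -/
def pegVerts {V : Type*} [DecidableEq V] {U : SimpleGraph V} {v₀ : V} (Γ : U.Walk v₀ v₀)
    (m : Equiv.Perm V) : Finset V :=
  Γ.support.toFinset.filter fun v => m v ∉ Γ.support

theorem mem_pegVerts {V : Type*} [DecidableEq V] {U : SimpleGraph V} {v₀ : V}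
    {Γ : U.Walk v₀ v₀} {m : Equiv.Perm V} {v : V} :
    v ∈ pegVerts Γ m ↔ v ∈ Γ.support ∧ m v ∉ Γ.support := by
  simp [pegVerts]

/-- A unicyclic graph has no chords of its cycle, so each peg has exactly one end on the cycle. -/
theorem pegCount_eq {V : Type*} [Fintype V] [DecidableEq V] {U : SimpleGraph V}
    {v₀ : V} {Γ : U.Walk v₀ v₀}
    (huniq : ∀ (v : V) (d : U.Walk v v), d.IsCycle → SameCycle d Γ)
    {m : Equiv.Perm V} (hm : m ∈ matchSet U ∅) :
    pegCount Γ (edgesOf m) = (pegVerts Γ m).card := by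
  obtain ⟨-, h2, h3⟩ := mem_matchSet.mp hm
  have hset : {e : Sym2 V | e ∈ edgesOf m ∧ IsPeg Γ e} =
      ((pegVerts Γ m).image fun v => s(v, m v) : Finset (Sym2 V)) := by
    ext e
    simp only [Set.mem_ofPred_eq, Finset.coe_image, Set.mem_image, Finset.mem_coe, mem_pegVerts]
    constructor
    · rintro ⟨he, x, y, rfl, h⟩
      rw [mem_edgesOf h3] at he
      subst he
      rcases h with ⟨hx, hy, hne⟩ | h
      · exact absurd (mem_edges_of_reachable huniq (h2 x (by simp))
          (reachable_on_cycle Γ hne hx hy)) hne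
      · exact ⟨x, h, rfl⟩
    · rintro ⟨x, h, rfl⟩
      exact ⟨(mem_edgesOf h3).mpr rfl, x, m x, rfl, Or.inr h⟩
  rw [pegCount, hset, Set.ncard_coe_finset, Finset.card_image_of_injOn]
  intro x hx y hy hxy
  rw [Finset.mem_coe, mem_pegVerts] at hx hy
  rcases Sym2.eq_iff.mp hxy with ⟨h, -⟩ | ⟨h, -⟩
  · exact h
  · exact absurd (h ▸ hx.1) hy.2

/-! ### Pegs and perfect matchings of `U - x - y` -/

/-- If the unique perfect matching `m` of `U` preserves the cycle, it agrees there with every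
perfect matching of the cycle vertices: gluing that one to `m` off the cycle gives a perfect matching
of `U`. -/
theorem glue_eq {V : Type*} [Fintype V] [DecidableEq V] {U : SimpleGraph V}
    {v₀ : V} {Γ : U.Walk v₀ v₀} {m : Equiv.Perm V} (hm : m ∈ matchSet U ∅)
    (hmu : ∀ m' ∈ matchSet U ∅, m' = m) (hmC : ∀ v ∈ Γ.support, m v ∈ Γ.support)
    {σ : Equiv.Perm V} (h1 : ∀ v ∈ Γ.support, σ v ∈ Γ.support ∧ U.Adj v (σ v) ∧ σ (σ v) = v)
    {v : V} (hv : v ∈ Γ.support) : σ v = m v := by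
  obtain ⟨-, m2, m3⟩ := mem_matchSet.mp hm
  let f : V → V := fun w => if w ∈ Γ.support then σ w else m w
  have hf : Function.Involutive f := by
    intro w
    by_cases hw : w ∈ Γ.support
    · simp [f, hw, (h1 w hw).1, (h1 w hw).2.2]
    · have : m w ∉ Γ.support := fun h => hw (by simpa [m3] using hmC _ h)
      simp [f, hw, this, m3]
  have := hmu (hf.toPerm f) (mem_matchSet.mpr ⟨by simp, fun w _ => ?_, hf⟩)
  · have h := congrArg (fun g : Equiv.Perm V => g v) this
    simpa [f, hv] using h
  · by_cases hw : w ∈ Γ.support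
    · simpa [f, hw] using (h1 w hw).2.1
    · simpa [f, hw] using m2 w (by simp)

/-- `U` with all edges meeting the cycle removed. -/
def offCycle {V : Type*} {U : SimpleGraph V} {v₀ : V} (Γ : U.Walk v₀ v₀) : SimpleGraph V where
  Adj u v := U.Adj u v ∧ u ∉ Γ.support ∧ v ∉ Γ.support
  symm := ⟨fun _ _ h => ⟨h.1.symm, h.2.2, h.2.1⟩⟩
  loopless := ⟨fun _ h => h.1.ne rfl⟩

theorem offCycle_reachable_notMem {V : Type*} {U : SimpleGraph V} {v₀ : V}
    {Γ : U.Walk v₀ v₀} {u v : V} (h : (offCycle Γ).Reachable u v) (hu : u ∉ Γ.support) :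
    v ∉ Γ.support := by
  obtain ⟨p⟩ := h
  induction p with
  | nil => exact hu
  | cons h p ih => exact ih h.2.2

/-- A component of `U` off the cycle is attached to the cycle by at most one edge; otherwise a
second cycle would arise. -/
theorem unique_attachment {V : Type*} [DecidableEq V] {U : SimpleGraph V}
    {v₀ : V} {Γ : U.Walk v₀ v₀}
    (huniq : ∀ (v : V) (d : U.Walk v v), d.IsCycle → SameCycle d Γ) {q r z c : V}
    (hq : q ∈ Γ.support) (hr : r ∉ Γ.support) (hqr : U.Adj q r)
    (hz : (offCycle Γ).Reachable r z) (hc : c ∈ Γ.support) (hzc : U.Adj z c) :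
    z = r ∧ c = q := by
  by_contra hcon
  have hz' := offCycle_reachable_notMem hz hr
  have hne : s(z, c) ∉ Γ.edges := fun h => hz' (Γ.fst_mem_support_of_mem_edges h)
  apply hne
  apply mem_edges_of_reachable huniq hzc
  have e1 : (U.deleteEdges {s(z, c)}).Reachable r z := by
    refine hz.mono fun u v huv => ?_
    rw [deleteEdges_adj, Set.mem_singleton_iff, Sym2.eq_iff]
    refine ⟨huv.1, ?_⟩
    rintro (⟨-, rfl⟩ | ⟨rfl, -⟩)
    · exact huv.2.2 hc
    · exact huv.2.1 hc
  have e2 : (U.deleteEdges {s(z, c)}).Reachable q r := by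
    apply Adj.reachable
    rw [deleteEdges_adj, Set.mem_singleton_iff, Sym2.eq_iff]
    refine ⟨hqr, ?_⟩
    rintro (⟨rfl, -⟩ | ⟨rfl, rfl⟩)
    · exact hz' hq
    · exact hcon ⟨rfl, rfl⟩
  exact ((e2.trans e1).symm).trans (reachable_on_cycle Γ hne hq hc)

/-- If `U - x - y` has a perfect matching `σ` preserving the cycle, then the component hanging at
each peg contains `x` or `y`: by `m` its order is odd, so `σ` cannot match it perfectly. -/
theorem peg_component {V : Type*} [Fintype V] [DecidableEq V] {U : SimpleGraph V}
    {v₀ : V} {Γ : U.Walk v₀ v₀}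
    (huniq : ∀ (v : V) (d : U.Walk v v), d.IsCycle → SameCycle d Γ)
    {m : Equiv.Perm V} (hm : m ∈ matchSet U ∅) {x y : V} {σ : Equiv.Perm V}
    (hσ : σ ∈ matchSet U {x, y}) (hσC : ∀ v ∈ Γ.support, σ v ∈ Γ.support) {q : V}
    (hq : q ∈ pegVerts Γ m) :
    (offCycle Γ).Reachable (m q) x ∨ (offCycle Γ).Reachable (m q) y := by
  classical
  obtain ⟨-, m2, m3⟩ := mem_matchSet.mp hm
  obtain ⟨s1, s2, s3⟩ := mem_matchSet.mp hσ
  obtain ⟨hqC, hmq⟩ := mem_pegVerts.mp hq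
  by_contra hcon
  push Not at hcon
  let K : Finset V := Finset.univ.filter fun z => (offCycle Γ).Reachable (m q) z
  have hK : ∀ z, z ∈ K ↔ (offCycle Γ).Reachable (m q) z := fun z => by simp [K]
  have hKC : ∀ z ∈ K, z ∉ Γ.support := fun z hz =>
    offCycle_reachable_notMem ((hK z).mp hz) hmq
  have hstep : ∀ z ∈ K, ∀ w, U.Adj z w → w ∉ Γ.support → w ∈ K := fun z hz w hzw hw =>
    (hK w).mpr (((hK z).mp hz).trans (Adj.reachable ⟨hzw, hKC z hz, hw⟩))
  have heven : Even K.card := by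
    have hF : ∀ z ∈ K, z ∉ ({x, y} : Finset V) := by
      intro z hz h
      rw [hK] at hz
      simp only [Finset.mem_insert, Finset.mem_singleton] at h
      rcases h with rfl | rfl
      · exact hcon.1 hz
      · exact hcon.2 hz
    refine even_card_of_fpf K σ (fun z hz => ?_) (fun z hz => (s2 z (hF z hz)).ne')
      (fun z _ => s3 z)
    refine hstep z hz _ (s2 z (hF z hz)) fun h => hKC z hz ?_
    simpa [s3] using hσC _ h
  have hmqK : m q ∈ K := (hK _).mpr (Reachable.refl _)
  have hodd : Even (K.erase (m q)).card := by
    refine even_card_of_fpf _ m (fun z hz => ?_) (fun z _ => (m2 z (by simp)).ne')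
      (fun z _ => m3 z)
    rw [Finset.mem_erase] at hz ⊢
    refine ⟨fun h => hKC z hz.2 (m.injective h ▸ hqC), hstep z hz.2 _ (m2 z (by simp)) ?_⟩
    intro h
    exact hz.1 (unique_attachment huniq hqC hmq (m2 q (by simp)) ((hK z).mp hz.2) h
      (m2 z (by simp))).1
  have := Finset.card_erase_add_one hmqK
  rw [← this] at heven
  exact (Nat.even_add_one.mp heven) hodd

/-- If `U` has a unique perfect matching `m` and `U - x - y` has two, there are exactly two pegs.
Their number is even, it is not zero by uniqueness of `m`, and at most two because distinct pegs
hang distinct components, each containing `x` or `y`. -/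
theorem pegVerts_card_eq_two {V : Type*} [Fintype V] [DecidableEq V] {U : SimpleGraph V}
    {v₀ : V} {Γ : U.Walk v₀ v₀} (hΓ : Γ.IsCycle)
    (huniq : ∀ (v : V) (d : U.Walk v v), d.IsCycle → SameCycle d Γ)
    {m : Equiv.Perm V} (hm : m ∈ matchSet U ∅) (hmu : ∀ m' ∈ matchSet U ∅, m' = m) {x y : V}
    {σ τ : Equiv.Perm V} (hσ : σ ∈ matchSet U {x, y}) (hτ : τ ∈ matchSet U {x, y})
    (hne : σ ≠ τ) : (pegVerts Γ m).card = 2 := by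
  classical
  obtain ⟨-, m2, m3⟩ := mem_matchSet.mp hm
  obtain ⟨s1, s2, s3⟩ := mem_matchSet.mp hσ
  obtain ⟨t1, t2, t3⟩ := mem_matchSet.mp hτ
  have hs := fun v hv => cycle_stable hΓ huniq hσ hτ hne (v := v) hv
  have ht := fun v hv => cycle_stable hΓ huniq hτ hσ hne.symm (v := v) hv
  -- parity: both the cycle and its part matched inside by `m` are even
  have hC : Even Γ.support.toFinset.card := by
    refine even_card_of_fpf _ σ (fun v hv => ?_) (fun v hv => ?_) (fun v _ => s3 v)
    · simpa using (hs v (by simpa using hv)).2.1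
    · exact (s2 v (hs v (by simpa using hv)).1).ne'
  have hin : Even (Γ.support.toFinset.filter fun v => ¬ m v ∉ Γ.support).card := by
    refine even_card_of_fpf _ m (fun v hv => ?_) (fun v _ => (m2 v (by simp)).ne')
      (fun v _ => m3 v)
    simp only [Finset.mem_filter, List.mem_toFinset, not_not, m3] at hv ⊢
    exact hv.symm
  have hsum := Finset.card_filter_add_card_filter_not (s := Γ.support.toFinset)
    (fun v => m v ∉ Γ.support)
  have hev : Even (pegVerts Γ m).card := by
    rw [← hsum, Nat.even_add] at hC
    exact hC.mpr hin
  have hpos : (pegVerts Γ m).card ≠ 0 := by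
    intro h0
    rw [Finset.card_eq_zero] at h0
    have hmC : ∀ v ∈ Γ.support, m v ∈ Γ.support := by
      intro v hv
      by_contra h
      have : v ∈ pegVerts Γ m := mem_pegVerts.mpr ⟨hv, h⟩
      simp [h0] at this
    have hv := Γ.start_mem_support
    refine (hs v₀ hv).2.2 ?_
    rw [glue_eq hm hmu hmC (fun v hv => ⟨(hs v hv).2.1, s2 v (hs v hv).1, s3 v⟩) hv,
      glue_eq hm hmu hmC (fun v hv => ⟨(ht v hv).2.1, t2 v (ht v hv).1, t3 v⟩) hv]
  have hle : (pegVerts Γ m).card ≤ 2 := by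
    have hcomp := fun q hq => peg_component huniq hm hσ (fun v hv => (hs v hv).2.1) (q := q) hq
    refine le_trans (Finset.card_le_card_of_injOn
      (fun q => if (offCycle Γ).Reachable (m q) x then x else y) (t := {x, y}) ?_ ?_)
      Finset.card_le_two
    · intro q _
      simp only [Finset.coe_insert, Finset.coe_singleton]
      split_ifs <;> simp
    · intro q hq r hr hqr
      rw [Finset.mem_coe] at hq hr
      have hsel : ∀ p ∈ pegVerts Γ m, (offCycle Γ).Reachable (m p)
          (if (offCycle Γ).Reachable (m p) x then x else y) := by
        intro p hp
        split_ifs with h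
        · exact h
        · exact (hcomp p hp).resolve_left h
      have hreach : (offCycle Γ).Reachable (m q) (m r) := by
        have h1 := hsel q hq
        have h2 := hsel r hr
        simp only at hqr
        rw [hqr] at h1
        exact h1.trans h2.symm
      have hq' := mem_pegVerts.mp hq
      have hr' := mem_pegVerts.mp hr
      exact (unique_attachment huniq hq'.1 hq'.2 (m2 q (by simp)) hreach hr'.1
        (m2 r (by simp)).symm).2.symm
  obtain ⟨k, hk⟩ := hev
  omega

/-- A path with an even number of vertices is perfectly matched by its first, third, … edges. -/
theorem path_matching {V : Type*} [DecidableEq V] {U : SimpleGraph V} (n : ℕ) :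
    ∀ {a b : V} (p : U.Walk a b), p.IsPath → p.length = 2 * n + 1 →
      ∃ f : V → V, f a = p.snd ∧ ∀ v ∈ p.support, s(v, f v) ∈ p.edges ∧ f (f v) = v := by
  induction n with
  | zero =>
    intro a b p hp hlen
    cases p with
    | nil => simp at hlen
    | @cons _ c _ h p =>
      cases p with
      | cons h' p => simp at hlen
      | nil =>
        refine ⟨Equiv.swap a b, by simp, fun v hv => ?_⟩
        simp only [Walk.support_cons, Walk.support_nil, List.mem_cons, List.not_mem_nil,
          or_false] at hv
        rcases hv with rfl | rfl <;> simp
  | succ n ih =>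
    intro a b p hp hlen
    cases p with
    | nil => simp at hlen
    | @cons _ c _ h p =>
      cases p with
      | nil => simp at hlen
      | @cons _ e _ h' p =>
        rw [Walk.cons_isPath_iff, Walk.cons_isPath_iff] at hp
        obtain ⟨⟨hp, hcp⟩, hap⟩ := hp
        obtain ⟨f, -, hf⟩ := ih p hp (by simp at hlen; omega)
        rw [Walk.support_cons, List.mem_cons, not_or] at hap
        refine ⟨fun v => if v = a then c else if v = c then a else f v, by simp, fun v hv => ?_⟩
        by_cases h1 : v = a
        · subst h1; simp
        by_cases h2 : v = c
        · subst h2; simp [h1, Sym2.eq_swap]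
        have hv' : v ∈ p.support := by simpa [h1, h2] using hv
        obtain ⟨e1, e2⟩ := hf v hv'
        have hfv := p.snd_mem_support_of_mem_edges e1
        have h3 : f v ≠ a := fun h => hap.2 (h ▸ hfv)
        have h4 : f v ≠ c := fun h => hcp (h ▸ hfv)
        simp [h1, h2, h3, h4, e1, e2]

/-- With exactly two pegs `pp'` and `qq'`, the graph `U - p' - q'` has two perfect matchings: they
agree with the matching of `U` off the cycle and alternate on the cycle. -/
theorem exists_two_matchings {V : Type*} [Fintype V] [DecidableEq V] {U : SimpleGraph V}
    {v₀ : V} {Γ : U.Walk v₀ v₀} (hΓ : Γ.IsCycle)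
    {m : Equiv.Perm V} (hm : m ∈ matchSet U ∅) (h2 : (pegVerts Γ m).card = 2) :
    ∃ x y : V, x ≠ y ∧ ∃ σ ∈ matchSet U {x, y}, ∃ τ ∈ matchSet U {x, y}, σ ≠ τ := by
  classical
  obtain ⟨-, m2, m3⟩ := mem_matchSet.mp hm
  have hC : Even Γ.support.toFinset.card := by
    have hin : Even (Γ.support.toFinset.filter fun v => ¬ m v ∉ Γ.support).card := by
      refine even_card_of_fpf _ m (fun v hv => ?_) (fun v _ => (m2 v (by simp)).ne')
        (fun v _ => m3 v)
      simp only [Finset.mem_filter, List.mem_toFinset, not_not, m3] at hv ⊢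
      exact hv.symm
    rw [← Finset.card_filter_add_card_filter_not (s := Γ.support.toFinset)
      (fun v => m v ∉ Γ.support), Nat.even_add]
    exact ⟨fun _ => hin, fun _ => by
      have : (pegVerts Γ m).card = 2 := h2
      rw [pegVerts] at this
      rw [this]; exact even_two⟩
  obtain ⟨p, q, hpq, hQ⟩ := Finset.card_eq_two.mp h2
  have hp : p ∈ Γ.support ∧ m p ∉ Γ.support := mem_pegVerts.mp (by rw [hQ]; simp)
  have hq : q ∈ Γ.support ∧ m q ∉ Γ.support := mem_pegVerts.mp (by rw [hQ]; simp)
  have hoff : ∀ v, v ∉ Γ.support → v ≠ m p → v ≠ m q → m v ∉ Γ.support := by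
    intro v hv h1 h2 h
    have : m v ∈ pegVerts Γ m := mem_pegVerts.mpr ⟨h, by rwa [m3]⟩
    rw [hQ, Finset.mem_insert, Finset.mem_singleton] at this
    rcases this with h | h
    · exact h1 (by rw [← h, m3])
    · exact h2 (by rw [← h, m3])
  have hext : ∀ f : V → V, (∀ v ∈ Γ.support, s(v, f v) ∈ Γ.edges ∧ f (f v) = v) →
      ∃ σ ∈ matchSet U {m p, m q}, ∀ v ∈ Γ.support, σ v = f v := by
    intro f hf
    have hfC : ∀ v ∈ Γ.support, f v ∈ Γ.support := fun v hv =>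
      Γ.snd_mem_support_of_mem_edges (hf v hv).1
    let g : V → V := fun v =>
      if v ∈ Γ.support then f v else if v = m p ∨ v = m q then v else m v
    have hg : Function.Involutive g := by
      intro v
      by_cases hv : v ∈ Γ.support
      · simp [g, hv, hfC v hv, (hf v hv).2]
      by_cases hx : v = m p ∨ v = m q
      · simp [g, hv, hx]
      · have h1 : m v ≠ m p := fun h => hv (m.injective h ▸ hp.1)
        have h2 : m v ≠ m q := fun h => hv (m.injective h ▸ hq.1)
        have h3 := hoff v hv (by tauto) (by tauto)
        have h4 : ¬ (m v = m p ∨ m v = m q) := by tauto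
        simp only [g, hv, hx, h3, h4, if_false, m3]
    refine ⟨hg.toPerm g, mem_matchSet.mpr ⟨fun v hv => ?_, fun v hv => ?_, hg⟩, fun v hv => ?_⟩
    · simp only [Finset.mem_insert, Finset.mem_singleton] at hv
      have hv' : v ∉ Γ.support := by
        rcases hv with rfl | rfl
        · exact hp.2
        · exact hq.2
      simp [g, hv, hv']
    · simp only [Finset.mem_insert, Finset.mem_singleton] at hv
      by_cases hvC : v ∈ Γ.support
      · simpa [g, hvC] using Γ.edges_subset_edgeSet (hf v hvC).1
      · simpa [g, hvC, hv] using m2 v (by simp)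
    · simp [g, hv]
  refine ⟨m p, m q, fun h => hpq (m.injective h), ?_⟩
  suffices h : ∃ f g : V → V, (∀ v ∈ Γ.support, s(v, f v) ∈ Γ.edges ∧ f (f v) = v) ∧
      (∀ v ∈ Γ.support, s(v, g v) ∈ Γ.edges ∧ g (g v) = v) ∧ ∃ v ∈ Γ.support, f v ≠ g v by
    obtain ⟨f, g, hf, hg, v, hv, hne⟩ := h
    obtain ⟨σ, hσ, hσf⟩ := hext f hf
    obtain ⟨τ, hτ, hτg⟩ := hext g hg
    exact ⟨σ, hσ, τ, hτ, fun h => hne (by rw [← hσf v hv, ← hτg v hv, h])⟩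
  clear hext hoff hp hq hQ h2
  -- Omitting the first or the second edge of the cycle leaves a path on the same vertices; the
  -- two path matchings differ at the vertex between the omitted edges.
  cases Γ with
  | nil => simp at hΓ
  | @cons _ b _ h p' =>
    rw [Walk.cons_isCycle_iff] at hΓ
    cases p' with
    | nil => exact absurd rfl h.ne
    | @cons _ c _ h' r =>
      have hlen : Odd (r.length + 1) := by
        have h1 : (Walk.cons h (Walk.cons h' r)).support.toFinset =
            (Walk.cons h' r).support.toFinset := by
          ext z; simp
        rw [h1, List.toFinset_card_of_nodup hΓ.1.support_nodup, Walk.length_support,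
          Walk.length_cons, Nat.even_add_one, Nat.not_even_iff_odd] at hC
        exact hC
      obtain ⟨k, hk⟩ := hlen
      obtain ⟨f, hfb, hf⟩ := path_matching k (Walk.cons h' r) hΓ.1 (by simpa using hk)
      have hr := (Walk.cons_isPath_iff h' r).mp hΓ.1
      have hcat : (r.concat h).IsPath := by
        rw [Walk.concat_isPath_iff]
        exact ⟨hr.1, hr.2⟩
      obtain ⟨g, -, hg⟩ := path_matching k (r.concat h) hcat (by simpa using hk)
      refine ⟨f, g, fun v hv => ?_, fun v hv => ?_, b, by simp, ?_⟩
      · have hv' : v ∈ (Walk.cons h' r).support := by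
          rw [Walk.support_cons, List.mem_cons] at hv
          rcases hv with rfl | hv
          · exact Walk.end_mem_support _
          · exact hv
        refine ⟨?_, (hf v hv').2⟩
        rw [Walk.edges_cons]
        exact List.mem_cons_of_mem _ (hf v hv').1
      · have hv' : v ∈ (r.concat h).support := by
          rw [Walk.support_concat]
          simp only [Walk.support_cons, List.mem_cons] at hv
          rcases hv with rfl | rfl | hv
          · simp
          · simp
          · simp [hv]
        refine ⟨?_, (hg v hv').2⟩
        have := (hg v hv').1
        rw [Walk.edges_concat, List.concat_eq_append, List.mem_append,
          List.mem_singleton] at this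
        simp only [Walk.edges_cons, List.mem_cons]
        tauto
      · intro hfg
        have h1 := (hg b (Walk.end_mem_support _)).1
        rw [← hfg, hfb, Walk.snd_cons, Walk.edges_concat, List.concat_eq_append, List.mem_append,
          List.mem_singleton] at h1
        rcases h1 with h1 | h1
        · exact hr.2 (r.fst_mem_support_of_mem_edges h1)
        · refine hΓ.2 ?_
          rw [← h1]; simp

/-! ### Entries of the inverse -/

/-- Jacobi's complementary minor identity for one row and column. -/
theorem minor_one {V : Type*} [Fintype V] [DecidableEq V] {A X : Matrix V V ℂ} (h : A * X = 1)
    (x : V) : (frozenRows A {x}).det * X.det = X x x := by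
  have e : frozenRows A {x} * X = 1 +
      (Matrix.of fun i (_ : Fin 1) => if i = x then (1 : ℂ) else 0) *
      (Matrix.of fun (_ : Fin 1) j => X x j - (1 : Matrix V V ℂ) x j) := by
    ext i j
    rw [Matrix.mul_apply, Matrix.add_apply, Matrix.mul_apply]
    by_cases hi : i = x
    · subst hi
      simp [frozenRows]
    · have := congrFun (congrFun h i) j
      rw [Matrix.mul_apply] at this
      simpa [frozenRows, hi] using this
  rw [← Matrix.det_mul, e, Matrix.det_one_add_mul_comm, Matrix.det_fin_one]
  simp [Matrix.mul_apply]

/-- Jacobi's complementary minor identity for two rows and columns. -/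
theorem minor_two {V : Type*} [Fintype V] [DecidableEq V] {A X : Matrix V V ℂ} (h : A * X = 1)
    {x y : V} (hxy : x ≠ y) :
    (frozenRows A {x, y}).det * X.det = X x x * X y y - X x y * X y x := by
  obtain ⟨f, h0, h1⟩ : ∃ f : Fin 2 → V, f 0 = x ∧ f 1 = y := ⟨![x, y], rfl, rfl⟩
  have e : frozenRows A {x, y} * X = 1 +
      (Matrix.of fun i (k : Fin 2) => if i = f k then (1 : ℂ) else 0) *
      (Matrix.of fun (k : Fin 2) j => X (f k) j - (1 : Matrix V V ℂ) (f k) j) := by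
    ext i j
    rw [Matrix.mul_apply, Matrix.add_apply, Matrix.mul_apply, Fin.sum_univ_two]
    simp only [Matrix.of_apply]
    rw [h0, h1]
    by_cases hi : i = x
    · subst hi
      simp [frozenRows, hxy]
    by_cases hi' : i = y
    · subst hi'
      simp [frozenRows, hi]
    · have := congrFun (congrFun h i) j
      rw [Matrix.mul_apply] at this
      simpa [frozenRows, hi, hi'] using this
  have key : ∀ k l : Fin 2,
      ((Matrix.of fun (k : Fin 2) j => X (f k) j - (1 : Matrix V V ℂ) (f k) j) *
        (Matrix.of fun i (k : Fin 2) => if i = f k then (1 : ℂ) else 0)) k l =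
      X (f k) (f l) - (1 : Matrix V V ℂ) (f k) (f l) := by
    intro k l
    rw [Matrix.mul_apply]
    simp only [Matrix.of_apply, mul_ite, mul_one, mul_zero, Finset.sum_ite_eq',
      Finset.mem_univ, if_true]
  rw [← Matrix.det_mul, e, Matrix.det_one_add_mul_comm, Matrix.det_fin_two]
  simp only [Matrix.add_apply, key]
  rw [h0, h1]
  simp [hxy, hxy.symm]

theorem exists_gaussian {V : Type*} {A : Matrix V V ℂ}
    (h : ∀ i j : V, A i j ∈ ({0, 1, -1, Complex.I, -Complex.I} : Set ℂ)) :
    ∃ B : Matrix V V GaussianInt, A = B.map GaussianInt.toComplex := by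
  have : ∀ i j, ∃ g : GaussianInt, A i j = GaussianInt.toComplex g := by
    intro i j
    rcases h i j with h | h | h | h | h
    · exact ⟨0, by rw [h]; simp⟩
    · exact ⟨1, by rw [h]; simp⟩
    · exact ⟨-1, by rw [h]; simp⟩
    · exact ⟨⟨0, 1⟩, by rw [h, GaussianInt.toComplex_def']; simp⟩
    · exact ⟨⟨0, -1⟩, by rw [h, GaussianInt.toComplex_def']; simp⟩
  choose B hB using this
  exact ⟨Matrix.of B, Matrix.ext fun i j => hB i j⟩

theorem gaussian_small {g : GaussianInt} (h : Complex.normSq (GaussianInt.toComplex g) ≤ 1) :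
    GaussianInt.toComplex g ∈ ({0, 1, -1, Complex.I, -Complex.I} : Set ℂ) := by
  obtain ⟨a, b⟩ := g
  rw [← GaussianInt.intCast_real_norm, Zsqrtd.norm_def] at h
  have h0 : a * a - -1 * b * b ≤ 1 := by exact_mod_cast h
  have h' : a ^ 2 + b ^ 2 ≤ 1 := by linarith
  rw [GaussianInt.toComplex_def']
  have ha : -1 ≤ a ∧ a ≤ 1 := by constructor <;> nlinarith [sq_nonneg b]
  have hb : -1 ≤ b ∧ b ≤ 1 := by constructor <;> nlinarith [sq_nonneg a]
  obtain ⟨ha1, ha2⟩ := ha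
  obtain ⟨hb1, hb2⟩ := hb
  interval_cases a <;> interval_cases b <;> simp_all

theorem normSq_le_one_of_mem {z : ℂ}
    (h : z ∈ ({0, 1, -1, Complex.I, -Complex.I} : Set ℂ)) : Complex.normSq z ≤ 1 := by
  rcases h with h | h | h | h | h <;> rw [h] <;> simp

/-- If `U` has a unique perfect matching, then `|A⁻¹ x y|²` is the number of perfect matchings of
`U - x - y`, and the diagonal of `A⁻¹` vanishes. -/
theorem normSq_inv_entry {V : Type*} [Fintype V] [DecidableEq V] {U T : SimpleGraph V}
    {A : Matrix V V ℂ} {a b : V} {d : V → ℂ} {ω : ℂ} (hG : Gauged U T A a b d ω)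
    {m : Equiv.Perm V} (hm : matchSet U ∅ = {m}) :
    (∀ x, A⁻¹ x x = 0) ∧
      ∀ x y, x ≠ y → Complex.normSq (A⁻¹ x y) = ((matchSet U {x, y}).card : ℝ) := by
  have hA : frozenRows A ∅ = A := by ext i j; simp [frozenRows]
  have hdet := det_frozenRows hG ∅
  rw [hA, hm, Finset.card_singleton, Nat.cast_one, mul_one] at hdet
  have hunit : IsUnit A.det := by
    rw [hdet]; exact (isUnit_one.neg).pow _
  have hinv : A * A⁻¹ = 1 := Matrix.mul_nonsing_inv A hunit
  have hdet' : ‖(A⁻¹).det‖ = 1 := by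
    have : A.det * (A⁻¹).det = 1 := by rw [← Matrix.det_mul, hinv, Matrix.det_one]
    have := congrArg norm this
    rw [norm_mul, hdet] at this
    simpa using this
  have hdiag : ∀ x, A⁻¹ x x = 0 := by
    intro x
    rw [← minor_one hinv x, det_frozenRows hG {x}]
    have : matchSet U {x} = ∅ := by
      rw [Finset.eq_empty_iff_forall_notMem]
      intro σ hσ
      have h1 := matchSet_even hσ
      have h2 : Even (Fintype.card V - (∅ : Finset V).card) :=
        matchSet_even (U := U) (σ := m) (by rw [hm]; simp)
      have h3 : 0 < Fintype.card V := Fintype.card_pos_iff.mpr ⟨x⟩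
      rw [Finset.card_singleton] at h1
      rw [Finset.card_empty, Nat.sub_zero] at h2
      obtain ⟨i, hi⟩ := h1
      obtain ⟨j, hj⟩ := h2
      omega
    simp [this]
  refine ⟨hdiag, fun x y hxy => ?_⟩
  have h := minor_two hinv hxy
  have hherm : star (A⁻¹ x y) = A⁻¹ y x := hG.herm.inv.apply y x
  rw [hdiag x, hdiag y, ← hherm, det_frozenRows hG] at h
  have h' := congrArg norm h
  rw [norm_mul, norm_mul, hdet', mul_zero, zero_sub, norm_neg, norm_mul, norm_star,
    norm_pow, norm_neg, norm_one, one_pow, one_mul, mul_one] at h'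
  rw [Complex.normSq_eq_norm_sq, sq, ← h']
  simp

/-- For a non-singular connected unicyclic 3-colored digraph whose
unique cycle `Γ` has weight `±i`: every entry of `A⁻¹` lies in `{0, ±1, ±i}` iff `U`
has a unique perfect matching `M` and the number of pegs on `Γ` relative to `M` is not
two. -/
theorem stmt18 {V : Type*} [Fintype V] [DecidableEq V] (U : SimpleGraph V)
    (A : Matrix V V ℂ) (hA : ThreeColored U A) (hU : Unicyclic V U)
    {v₀ : V} (Γ : U.Walk v₀ v₀) (hΓ : Γ.IsCycle)
    (hw : walkWeight A Γ ∈ ({Complex.I, -Complex.I} : Set ℂ))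
    (huniq : ∀ (v : V) (d : U.Walk v v), d.IsCycle → SameCycle d Γ)
    (hdet : A.det ≠ 0) :
    (∀ i j : V, A⁻¹ i j ∈ ({0, 1, -1, Complex.I, -Complex.I} : Set ℂ)) ↔
      ∃ M, IsPM U M ∧ (∀ M', IsPM U M' → M' = M) ∧ pegCount Γ M ≠ 2 := by
  have hcolored := hA
  obtain ⟨hherm, hdiag, hedge, hnon⟩ := hA
  obtain ⟨T, a, b, d, ω, hG⟩ := exists_gauged hcolored hΓ hw huniq
  have hA0 : frozenRows A ∅ = A := by ext i j; simp [frozenRows]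
  have hdetA := det_frozenRows hG ∅
  rw [hA0] at hdetA
  have hinv : A * A⁻¹ = 1 := Matrix.mul_nonsing_inv A hdet.isUnit
  constructor
  · intro hent
    obtain ⟨Y, hY⟩ := exists_gaussian hent
    -- `det A` is a rational integer whose inverse is a Gaussian integer
    have hcard : (matchSet U ∅).card = 1 := by
      have h1 : A.det * GaussianInt.toComplex Y.det = 1 := by
        rw [RingHom.map_det, RingHom.mapMatrix_apply, ← hY, ← Matrix.det_mul, hinv,
          Matrix.det_one]
      have h2 := congrArg Complex.normSq h1
      rw [hdetA, map_mul, map_mul, map_pow, Complex.normSq_neg, map_one, one_pow, one_mul,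
        Complex.normSq_natCast, ← GaussianInt.intCast_real_norm] at h2
      have h3 : (((matchSet U ∅).card : ℤ) * (matchSet U ∅).card) * Y.det.norm = 1 := by
        exact_mod_cast h2
      have h4 : ((matchSet U ∅).card : ℤ) ∣ 1 :=
        ⟨(matchSet U ∅).card * Y.det.norm, by rw [← mul_assoc]; exact h3.symm⟩
      exact_mod_cast Int.eq_one_of_dvd_one (by positivity) h4
    obtain ⟨m, hm⟩ := Finset.card_eq_one.mp hcard
    have hmem : m ∈ matchSet U ∅ := by rw [hm]; simp
    refine ⟨edgesOf m, isPM_edgesOf hmem, fun M' hM' => ?_, ?_⟩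
    · obtain ⟨σ, hσ, rfl⟩ := exists_perm_of_isPM hM'
      rw [hm, Finset.mem_singleton] at hσ
      rw [hσ]
    · rw [pegCount_eq huniq hmem]
      intro h2
      obtain ⟨x, y, hxy, σ, hσ, τ, hτ, hne⟩ := exists_two_matchings hΓ hmem h2
      have h1 := (normSq_inv_entry hG hm).2 x y hxy
      have h3 : 1 < (matchSet U {x, y}).card := Finset.one_lt_card.mpr ⟨σ, hσ, τ, hτ, hne⟩
      have h4 := normSq_le_one_of_mem (hent x y)
      rw [h1] at h4
      have : (matchSet U {x, y}).card ≤ 1 := by exact_mod_cast h4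
      omega
  · rintro ⟨M, hM, hMu, hpeg⟩
    obtain ⟨m, hmem, rfl⟩ := exists_perm_of_isPM hM
    have hmu : ∀ m' ∈ matchSet U ∅, m' = m := fun m' hm' =>
      edgesOf_injOn hm' hmem (hMu _ (isPM_edgesOf hm'))
    have hm : matchSet U ∅ = {m} := Finset.eq_singleton_iff_unique_mem.mpr ⟨hmem, hmu⟩
    rw [pegCount_eq huniq hmem] at hpeg
    obtain ⟨hd0, hoff⟩ := normSq_inv_entry hG hm
    obtain ⟨B, hB⟩ := exists_gaussian (A := A) (fun i j => by
      by_cases h : U.Adj i j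
      · exact Or.inr (hedge i j h)
      · exact Or.inl (hG.zero i j h))
    have hgauss : ∀ i j, ∃ g : GaussianInt, A⁻¹ i j = GaussianInt.toComplex g := by
      intro i j
      have hadj : A.adjugate = B.adjugate.map GaussianInt.toComplex := by
        have := RingHom.map_adjugate GaussianInt.toComplex B
        rw [RingHom.mapMatrix_apply, RingHom.mapMatrix_apply, ← hB] at this
        exact this.symm
      rw [hm, Finset.card_singleton, Nat.cast_one, mul_one] at hdetA
      rw [Matrix.inv_def, hdetA, hadj, Matrix.smul_apply, Matrix.map_apply]
      rcases neg_one_pow_eq_or ℂ ((Fintype.card V - (∅ : Finset V).card) / 2) with h | h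
      · exact ⟨B.adjugate i j, by rw [h]; simp⟩
      · refine ⟨-B.adjugate i j, ?_⟩
        have : Ring.inverse (-1 : ℂ) = -1 := by rw [Ring.inverse_eq_inv']; norm_num
        rw [h, this]; simp
    intro i j
    by_cases hij : i = j
    · subst hij; exact Or.inl (hd0 i)
    obtain ⟨g, hg⟩ := hgauss i j
    have hN := hoff i j hij
    rw [hg] at hN ⊢
    apply gaussian_small
    rw [hN]
    have : (matchSet U {i, j}).card ≤ 1 := by
      by_contra hcon
      obtain ⟨σ, hσ, τ, hτ, hne⟩ := Finset.one_lt_card.mp (not_le.mp hcon)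
      exact hpeg (pegVerts_card_eq_two hΓ huniq hmem hmu hσ hτ hne)
    exact_mod_cast this
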